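/- Let G be a finite edge-weighted simple graph with vertex set V, U a vertex cover of G, I = V ∖ U, 𝒞 ≥ 1, and let P' = {C'_1, …, C'_p} be a partition of U into nonempty parts each of size at most 𝒞. Say that a 𝒞-partition P of G extends P' if the nonempty sets among {Q ∩ U : Q ∈ P} are exactly C'_1, …, C'_p. For y ∈ I and i ∈ {1, …, p} put ω(i, y) = Σ_{u ∈ C'_i, uy ∈ E(G)} w(uy). Then the maximum of v(P) over all 𝒞-partitions P of G extending P' equals v(P') + M, where v(P') is the total weight of edges of G with both endpoints in a common part C'_i, and M is the maximum, over all partial functions f from I to {1, …, p} such that |f⁻¹(i)| ≤ 𝒞 − |C'_i| for every i, of Σ_{y ∈ dom f} ω(f(y), y). -/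

import Mathlib

open scoped Classical

/-- The weight contributed by a single part `Q`: total weight of edges of `G`
with both endpoints in `Q`. -/
noncomputable def partVal {V : Type*} [DecidableEq V] (G : SimpleGraph V)
    (w : Sym2 V → ℕ) (Q : Finset V) : ℕ :=
  ∑ e ∈ Q.sym2.filter (fun e => e ∈ G.edgeSet), w e

/-- The value of a partition `P` of the vertex set of `G`. -/
noncomputable def pVal {V : Type*} [Fintype V] [DecidableEq V] (G : SimpleGraph V)
    (w : Sym2 V → ℕ) (P : Finpartition (Finset.univ : Finset V)) : ℕ :=
  ∑ Q ∈ P.parts, partVal G w Q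

theorem partVal_insert_aux {V : Type*} [DecidableEq V] (G : SimpleGraph V)
    (w : Sym2 V → ℕ) (Q : Finset V) (y : V) (hy : y ∉ Q) :
    partVal G w (insert y Q) =
      partVal G w Q + ∑ u ∈ Q.filter (fun u => G.Adj u y), w s(u, y) := by
  unfold partVal
  have h1 : (insert y Q).sym2.filter (fun e => e ∈ G.edgeSet) =
      Q.sym2.filter (fun e => e ∈ G.edgeSet) ∪
        (Q.filter (fun u => G.Adj u y)).image (fun u => s(u, y)) := by
    ext e
    induction e using Sym2.ind with
    | _ a b =>
      simp only [Finset.mem_filter, Finset.mk_mem_sym2_iff, Finset.mem_insert,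
        SimpleGraph.mem_edgeSet, Finset.mem_union, Finset.mem_image, Sym2.eq_iff]
      constructor
      · rintro ⟨⟨ha | ha, hb | hb⟩, hab⟩
        · subst ha; subst hb; exact absurd hab (G.loopless.irrefl _)
        · subst ha; exact Or.inr ⟨b, ⟨hb, hab.symm⟩, Or.inr ⟨rfl, rfl⟩⟩
        · subst hb; exact Or.inr ⟨a, ⟨ha, hab⟩, Or.inl ⟨rfl, rfl⟩⟩
        · exact Or.inl ⟨⟨ha, hb⟩, hab⟩
      · rintro (⟨⟨ha, hb⟩, hab⟩ | ⟨u, ⟨hu, huy⟩, ⟨rfl, rfl⟩ | ⟨rfl, rfl⟩⟩)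
        · exact ⟨⟨Or.inr ha, Or.inr hb⟩, hab⟩
        · exact ⟨⟨Or.inr hu, Or.inl rfl⟩, huy⟩
        · exact ⟨⟨Or.inl rfl, Or.inr hu⟩, huy.symm⟩
  rw [h1, Finset.sum_union, Finset.sum_image]
  · intro a _ b _ hab
    rcases Sym2.eq_iff.1 hab with h | h
    · exact h.1
    · exact h.1.trans h.2
  · rw [Finset.disjoint_left]
    intro e he he'
    obtain ⟨u, hu, rfl⟩ := Finset.mem_image.1 he'
    simp only [Finset.mem_filter, Finset.mk_mem_sym2_iff] at he
    exact hy he.1.2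

theorem partVal_union_aux {V : Type*} [DecidableEq V] (G : SimpleGraph V)
    (w : Sym2 V → ℕ) (U : Finset V) (hU : ∀ u v : V, G.Adj u v → u ∈ U ∨ v ∈ U)
    (T : Finset V) (hT : T ⊆ U) (R : Finset V) (hR : ∀ y ∈ R, y ∉ U) :
    partVal G w (T ∪ R) =
      partVal G w T + ∑ y ∈ R, ∑ u ∈ T.filter (fun u => G.Adj u y), w s(u, y) := by
  induction R using Finset.induction_on with
  | empty => simp
  | insert y R hy ih =>
    have hyU := hR y (Finset.mem_insert_self _ _)
    have hR' : ∀ y ∈ R, y ∉ U := fun z hz => hR z (Finset.mem_insert_of_mem hz)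
    rw [Finset.union_insert, partVal_insert_aux, ih hR', Finset.sum_insert hy]
    · have : (T ∪ R).filter (fun u => G.Adj u y) = T.filter (fun u => G.Adj u y) := by
        ext u
        simp only [Finset.mem_filter, Finset.mem_union]
        constructor
        · rintro ⟨h | h, ha⟩
          · exact ⟨h, ha⟩
          · rcases hU _ _ ha with h' | h'
            · exact absurd h' (hR' u h)
            · exact absurd h' hyU
        · rintro ⟨h, ha⟩; exact ⟨Or.inl h, ha⟩
      rw [this]; ring
    · simp only [Finset.mem_union, not_or]
      exact ⟨fun h => hyU (hT h), hy⟩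

theorem partVal_split_aux {V : Type*} [Fintype V] [DecidableEq V] (G : SimpleGraph V)
    (w : Sym2 V → ℕ) (U : Finset V) (hU : ∀ u v : V, G.Adj u v → u ∈ U ∨ v ∈ U)
    (Q : Finset V) :
    partVal G w Q = partVal G w (Q ∩ U) +
      ∑ y ∈ Q, if y ∈ U then 0 else
        ∑ u ∈ (Q ∩ U).filter (fun u => G.Adj u y), w s(u, y) := by
  have h := partVal_union_aux G w U hU (Q ∩ U) Finset.inter_subset_right (Q \ U)
    (fun y hy => (Finset.mem_sdiff.1 hy).2)
  have h2 : Q ∩ U ∪ Q \ U = Q := by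
    ext x; simp only [Finset.mem_union, Finset.mem_inter, Finset.mem_sdiff]; tauto
  rw [h2] at h
  rw [h]
  congr 1
  rw [Finset.sdiff_eq_filter, Finset.sum_filter]
  apply Finset.sum_congr rfl
  intro y _
  by_cases hy : y ∈ U <;> simp [hy]

theorem pVal_core_aux {V : Type*} [Fintype V] [DecidableEq V] (G : SimpleGraph V)
    (w : Sym2 V → ℕ)
    (U : Finset V) (hU : ∀ u v : V, G.Adj u v → u ∈ U ∨ v ∈ U)
    (p : ℕ) (C' : Fin p → Finset V)
    (hne : ∀ i, (C' i).Nonempty)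
    (hdisj : ∀ i j, i ≠ j → Disjoint (C' i) (C' j))
    (P : Finpartition (Finset.univ : Finset V))
    (h2 : ∀ Q ∈ P.parts, (Q ∩ U).Nonempty → ∃ i, Q ∩ U = C' i)
    (h3 : ∀ i, ∃ Q ∈ P.parts, Q ∩ U = C' i)
    (f : V → Option (Fin p))
    (hf : ∀ y, y ∉ U → P.part y ∩ U = (f y).elim ∅ C') :
    pVal G w P = (∑ i, partVal G w (C' i)) +
      ∑ y ∈ Finset.univ \ U,
          (f y).elim 0 (fun i => ∑ u ∈ (C' i).filter (fun u => G.Adj u y), w s(u, y)) := by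
  unfold pVal
  rw [Finset.sum_congr rfl (fun Q _ => partVal_split_aux G w U hU Q), Finset.sum_add_distrib]
  congr 1
  · choose q hq hqU using h3
    symm
    refine Finset.sum_of_injOn q ?_ ?_ ?_ ?_
    · intro i _ j _ hij
      by_contra hne'
      have := hdisj i j hne'
      rw [← hqU i, ← hqU j, hij, disjoint_self, hqU j] at this
      exact (hne j).ne_empty this
    · intro i _; exact hq i
    · intro Q hQ hn
      by_cases he : (Q ∩ U).Nonempty
      · exfalso
        obtain ⟨i, hi⟩ := h2 Q hQ he
        obtain ⟨x, hx⟩ := hne i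
        have hx1 : x ∈ Q := (Finset.mem_inter.1 (hi ▸ hx)).1
        have hx2 : x ∈ q i := (Finset.mem_inter.1 ((hqU i).symm ▸ hx)).1
        exact hn ⟨i, by simp, P.eq_of_mem_parts (hq i) hQ hx2 hx1⟩
      · rw [Finset.not_nonempty_iff_eq_empty] at he
        rw [he]; simp [partVal]
    · intro i _; rw [hqU i]
  · have e1 : ∀ Q ∈ P.parts, (∑ y ∈ Q, if y ∈ U then 0 else
        ∑ u ∈ (Q ∩ U).filter (fun u => G.Adj u y), w s(u, y)) =
        ∑ y ∈ id Q, if y ∈ U then 0 else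
        ∑ u ∈ (P.part y ∩ U).filter (fun u => G.Adj u y), w s(u, y) := by
      intro Q hQ
      apply Finset.sum_congr rfl
      intro y hy
      rw [P.part_eq_of_mem hQ hy]
    rw [Finset.sum_congr rfl e1, ← Finset.sum_biUnion P.disjoint, P.biUnion_parts,
      Finset.sdiff_eq_filter, Finset.sum_filter]
    apply Finset.sum_congr rfl
    intro y _
    by_cases hy : y ∈ U
    · simp [hy]
    · simp only [hy, if_false, not_false_eq_true, if_true]
      rw [hf y hy]
      cases f y <;> simp


/-- Given a partition `C'` of a vertex cover `U` into nonempty parts of size at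
most `𝒞`, the maximum value of a 𝒞-partition of `G` extending it equals the
value of `C'` plus the maximum total gain over capacity-respecting partial
assignments of the vertices of `I = V ∖ U` to the parts. -/
theorem stmt5 {V : Type*} [Fintype V] [DecidableEq V] (G : SimpleGraph V)
    (w : Sym2 V → ℕ) (C : ℕ) (hC : 1 ≤ C)
    (U : Finset V) (hU : ∀ u v : V, G.Adj u v → u ∈ U ∨ v ∈ U)
    (p : ℕ) (C' : Fin p → Finset V)
    (hne : ∀ i, (C' i).Nonempty)
    (hsub : ∀ i, C' i ⊆ U)
    (hdisj : ∀ i j, i ≠ j → Disjoint (C' i) (C' j))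
    (hcover : ∀ u ∈ U, ∃ i, u ∈ C' i)
    (hcard : ∀ i, (C' i).card ≤ C) :
    sSup {t : ℕ | ∃ P : Finpartition (Finset.univ : Finset V),
        (∀ Q ∈ P.parts, Q.card ≤ C) ∧
        (∀ Q ∈ P.parts, (Q ∩ U).Nonempty → ∃ i, Q ∩ U = C' i) ∧
        (∀ i, ∃ Q ∈ P.parts, Q ∩ U = C' i) ∧
        pVal G w P = t} =
    (∑ i, partVal G w (C' i)) +
      sSup {t : ℕ | ∃ f : V → Option (Fin p),
        (∀ y : V, f y ≠ none → y ∈ Finset.univ \ U) ∧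
        (∀ i : Fin p,
          ((Finset.univ \ U).filter (fun y => f y = some i)).card ≤ C - (C' i).card) ∧
        (∑ y ∈ Finset.univ \ U,
          (f y).elim 0 (fun i => ∑ u ∈ (C' i).filter (fun u => G.Adj u y), w s(u, y))) = t} := by
  set A := {t : ℕ | ∃ P : Finpartition (Finset.univ : Finset V),
        (∀ Q ∈ P.parts, Q.card ≤ C) ∧
        (∀ Q ∈ P.parts, (Q ∩ U).Nonempty → ∃ i, Q ∩ U = C' i) ∧
        (∀ i, ∃ Q ∈ P.parts, Q ∩ U = C' i) ∧
        pVal G w P = t} with hA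
  set B := {t : ℕ | ∃ f : V → Option (Fin p),
        (∀ y : V, f y ≠ none → y ∈ Finset.univ \ U) ∧
        (∀ i : Fin p,
          ((Finset.univ \ U).filter (fun y => f y = some i)).card ≤ C - (C' i).card) ∧
        (∑ y ∈ Finset.univ \ U,
          (f y).elim 0 (fun i => ∑ u ∈ (C' i).filter (fun u => G.Adj u y), w s(u, y))) = t} with hB
  have hBne : B.Nonempty := ⟨_, fun _ => none, by simp, by simp, rfl⟩
  have hBfin : B.Finite := by
    refine (Set.finite_range (fun f : V → Option (Fin p) => ∑ y ∈ Finset.univ \ U,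
          (f y).elim 0 (fun i => ∑ u ∈ (C' i).filter (fun u => G.Adj u y), w s(u, y)))).subset ?_
    rintro t ⟨f, -, -, rfl⟩
    exact ⟨f, rfl⟩
  have hinj : ∀ i j x, x ∈ C' i → x ∈ C' j → i = j := by
    intro i j x hi hj
    by_contra h
    exact Finset.disjoint_left.1 (hdisj i j h) hi hj
  have h12 : ∀ t ∈ A, ∃ b ∈ B, t = (∑ i, partVal G w (C' i)) + b := by
    rintro t ⟨P, h1, h2, h3, rfl⟩
    let f : V → Option (Fin p) := fun y =>
      if h : y ∉ U ∧ ∃ i, P.part y ∩ U = C' i then some h.2.choose else none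
    have hfs : ∀ y i, f y = some i → y ∉ U ∧ P.part y ∩ U = C' i := by
      intro y i h
      by_cases hh : y ∉ U ∧ ∃ i, P.part y ∩ U = C' i
      · have : f y = some hh.2.choose := dif_pos hh
        rw [this] at h
        have := hh.2.choose_spec
        rw [Option.some.inj h] at this
        exact ⟨hh.1, this⟩
      · have : f y = none := dif_neg hh
        rw [this] at h; cases h
    have hfn : ∀ y, f y = none → y ∉ U → ¬ ∃ i, P.part y ∩ U = C' i := by
      intro y h hy hex
      have : f y = some _ := dif_pos ⟨hy, hex⟩
      rw [this] at h; cases h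
    refine ⟨_, ⟨f, ?_, ?_, rfl⟩, ?_⟩
    · intro y hy
      obtain ⟨i, hi⟩ := Option.ne_none_iff_exists'.1 hy
      simpa using (hfs y i hi).1
    · intro i
      obtain ⟨Q, hQ, hQU⟩ := h3 i
      have hsubQ : (Finset.univ \ U).filter (fun y => f y = some i) ⊆ Q \ U := by
        intro y hy
        obtain ⟨hyU, hy⟩ := Finset.mem_filter.1 hy
        obtain ⟨hyU, hyP⟩ := hfs y i hy
        obtain ⟨x, hx⟩ := hne i
        have hx1 : x ∈ P.part y := (Finset.mem_inter.1 (hyP.symm ▸ hx)).1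
        have hx2 : x ∈ Q := (Finset.mem_inter.1 (hQU.symm ▸ hx)).1
        have he : P.part y = Q := P.eq_of_mem_parts (P.part_mem.2 (by simp)) hQ hx1 hx2
        rw [Finset.mem_sdiff, ← he]
        exact ⟨P.mem_part_self.2 (by simp), hyU⟩
      have hc := Finset.card_le_card hsubQ
      have hc2 := Finset.card_sdiff_add_card_inter Q U
      rw [hQU] at hc2
      have := h1 Q hQ
      omega
    · refine pVal_core_aux G w U hU p C' hne hdisj P h2 h3 f ?_
      intro y hy
      cases hfy : f y with
      | none =>
        have := hfn y hfy hy
        by_contra hemp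
        exact this (h2 _ (P.part_mem.2 (by simp)) (Finset.nonempty_iff_ne_empty.2 hemp))
      | some i => exact (hfs y i hfy).2
  have h21 : ∀ b ∈ B, (∑ i, partVal G w (C' i)) + b ∈ A := by
    rintro b ⟨f, hf1, hf2, rfl⟩
    choose c hc using hcover
    have hfU : ∀ y i, f y = some i → y ∉ U := by
      intro y i h
      have := hf1 y (by simp [h])
      simpa using this
    let g : V → Fin p ⊕ V := fun x =>
      if h : x ∈ U then Sum.inl (c x h) else (f x).elim (Sum.inr x) Sum.inl
    have hgl : ∀ x i, g x = Sum.inl i ↔ x ∈ C' i ∨ f x = some i := by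
      intro x i
      by_cases hx : x ∈ U
      · have : g x = Sum.inl (c x hx) := dif_pos hx
        rw [this, Sum.inl.injEq]
        constructor
        · rintro rfl; exact Or.inl (hc x hx)
        · rintro (h | h)
          · exact hinj _ _ x (hc x hx) h
          · exact absurd hx (hfU x i h)
      · have : g x = (f x).elim (Sum.inr x) Sum.inl := dif_neg hx
        rw [this]
        have hx' : x ∉ C' i := fun h => hx (hsub i h)
        cases f x <;> simp [hx']
    have hgr : ∀ x z, g x = Sum.inr z → x = z ∧ x ∉ U ∧ f x = none := by
      intro x z h
      by_cases hx : x ∈ U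
      · have : g x = Sum.inl (c x hx) := dif_pos hx
        rw [this] at h; cases h
      · have : g x = (f x).elim (Sum.inr x) Sum.inl := dif_neg hx
        rw [this] at h
        cases hfx : f x with
        | none => rw [hfx] at h; exact ⟨Sum.inr.inj h, hx, rfl⟩
        | some i => rw [hfx] at h; cases h
    let P : Finpartition (Finset.univ : Finset V) := Finpartition.ofSetoid (Setoid.ker g)
    have hP : ∀ x z, z ∈ P.part x ↔ g x = g z := fun x z =>
      Finpartition.mem_part_ofSetoid_iff_rel
    have hpl : ∀ x i, g x = Sum.inl i → P.part x ∩ U = C' i := by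
      intro x i h
      ext z
      rw [Finset.mem_inter, hP, h, eq_comm, hgl]
      constructor
      · rintro ⟨h | h, hz⟩
        · exact h
        · exact absurd hz (hfU z i h)
      · intro h; exact ⟨Or.inl h, hsub i h⟩
    have hpr : ∀ x z, g x = Sum.inr z → P.part x = {x} := by
      intro x z h
      ext y
      rw [hP, Finset.mem_singleton]
      constructor
      · intro h'
        rw [(hgr x z h).1, (hgr y z (h' ▸ h)).1]
      · rintro rfl; rfl
    have hpart : ∀ Q ∈ P.parts, ∃ x, P.part x = Q := by
      intro Q hQ
      obtain ⟨x, hx⟩ := P.nonempty_of_mem_parts hQ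
      exact ⟨x, P.part_eq_of_mem hQ hx⟩
    have H2 : ∀ Q ∈ P.parts, (Q ∩ U).Nonempty → ∃ i, Q ∩ U = C' i := by
      intro Q hQ hQU
      obtain ⟨x, rfl⟩ := hpart Q hQ
      cases hgx : g x with
      | inl i => exact ⟨i, hpl x i hgx⟩
      | inr z =>
        exfalso
        rw [hpr x z hgx] at hQU
        obtain ⟨y, hy⟩ := hQU
        obtain ⟨hy1, hy2⟩ := Finset.mem_inter.1 hy
        rw [Finset.mem_singleton] at hy1
        subst hy1
        exact (hgr y z hgx).2.1 hy2
    have H3 : ∀ i, ∃ Q ∈ P.parts, Q ∩ U = C' i := by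
      intro i
      obtain ⟨x, hx⟩ := hne i
      exact ⟨P.part x, P.part_mem.2 (by simp), hpl x i ((hgl x i).2 (Or.inl hx))⟩
    refine ⟨P, ?_, H2, H3, ?_⟩
    · intro Q hQ
      obtain ⟨x, rfl⟩ := hpart Q hQ
      cases hgx : g x with
      | inl i =>
        have hs : P.part x ⊆ C' i ∪ (Finset.univ \ U).filter (fun y => f y = some i) := by
          intro z hz
          rw [hP, hgx, eq_comm, hgl] at hz
          rw [Finset.mem_union, Finset.mem_filter]
          rcases hz with hz | hz
          · exact Or.inl hz
          · exact Or.inr ⟨by simpa using hfU z i hz, hz⟩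
        have a1 := Finset.card_le_card hs
        have a2 := Finset.card_union_le (C' i) ((Finset.univ \ U).filter (fun y => f y = some i))
        have a3 := hf2 i
        have a4 := hcard i
        omega
      | inr z => rw [hpr x z hgx]; simpa using hC
    · refine pVal_core_aux G w U hU p C' hne hdisj P H2 H3 f ?_
      intro y hy
      cases hgy : g y with
      | inl i =>
        rw [hpl y i hgy]
        rcases (hgl y i).1 hgy with h | h
        · exact absurd (hsub i h) hy
        · rw [h]; rfl
      | inr z =>
        rw [hpr y z hgy, (hgr y z hgy).2.2]
        simp [hy]
  have hbdd : BddAbove B := hBfin.bddAbove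
  apply le_antisymm
  · refine csSup_le ⟨_, h21 _ hBne.some_mem⟩ ?_
    intro t ht
    obtain ⟨b, hb, rfl⟩ := h12 t ht
    exact Nat.add_le_add_left (le_csSup hbdd hb) _
  · refine le_csSup ?_ (h21 _ (Nat.sSup_mem hBne hbdd))
    refine ⟨(∑ i, partVal G w (C' i)) + sSup B, ?_⟩
    intro t ht
    obtain ⟨b, hb, rfl⟩ := h12 t ht
    exact Nat.add_le_add_left (le_csSup hbdd hb) _
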